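/- Every N-qubit state of the form |ψ⟩ ∝ Σ_{x∈A} i^{l(x)} (-1)^{q(x)} |x⟩, where A ⊆ (Z_2)^N is affine, l is linear, and q is quadratic over Z_2, is preserved in form under application of any Hadamard gate: applying H to any single qubit yields a state ∝ Σ_{x∈A'} i^{l'(x)} (-1)^{q'(x)} |x⟩ for some affine A', linear l', and quadratic q'. -/

import Mathlib

open scoped Classical

/-- A linear function on `(Z_2)^K`. -/
def IsLinear {K : ℕ} (l : (Fin K → ZMod 2) → ZMod 2) : Prop :=
  ∃ d : Fin K → ZMod 2, ∀ x, l x = ∑ i, d i * x i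

/-- A quadratic function on `(Z_2)^K`. -/
def IsQuadratic {K : ℕ} (q : (Fin K → ZMod 2) → ZMod 2) : Prop :=
  ∃ (c : Fin K → Fin K → ZMod 2) (d : Fin K → ZMod 2),
    ∀ x, q x = (∑ i, ∑ j, c i j * x i * x j) + ∑ i, d i * x i

/-- The Hadamard gate on qubit `k` of `N` qubits:
`H|a⟩ = (1/√2) Σ_b (-1)^{ab} |b⟩` on qubit `k`, identity elsewhere. -/
noncomputable def Hgate {N : ℕ} (k : Fin N) :
    Matrix (Fin N → ZMod 2) (Fin N → ZMod 2) ℂ :=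
  Matrix.of fun y z =>
    if ∀ i, i ≠ k → y i = z i then
      ((1 / Real.sqrt 2 : ℝ) : ℂ) * (-1 : ℂ) ^ (y k * z k).val
    else 0

/-! Since `H = (X + Z) / √2`, the gate sends `ψ` to `y ↦ ψ (y + e) + (-1) ^ ε y * ψ y` up to a
scalar, where `e` is the `k`-th basis vector and `ε` the `k`-th coordinate. The functions
`i ^ l(x) (-1) ^ q(x)` are, up to a scalar, exactly the functions `p` for which
`p (x + y) p 0 / (p x p y)` is the sign of a bilinear form, a class stable under products and
affine substitutions. Let `ψ` be the restriction of such a `p` to `t + W`. If `e ∉ W`, the two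
summands have disjoint supports, and on their union `t + (W ⊔ ⟨e⟩)` the sum is `p` composed with
the affine projection onto `t + W` along `e`, up to sign. If `e ∈ W`, the sum is
`p y * (-1) ^ ε y * (1 + γ (-1) ^ φ y)` on `t + W`, with `γ = p e / p 0` a fourth root of unity
and `φ` linear: `γ = ±1` cuts the support down to a hyperplane, and `γ = ±i` multiplies by another
phase. -/

section Signs

theorem zmod_two_eq_zero_or_one (a : ZMod 2) : a = 0 ∨ a = 1 := by
  decide +revert

theorem neg_one_pow_val_add {R : Type*} [Monoid R] [HasDistribNeg R] (a b : ZMod 2) :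
    (-1 : R) ^ (a + b).val = (-1) ^ a.val * (-1) ^ b.val := by
  rw [ZMod.val_add, ← pow_eq_pow_mod _ neg_one_sq, pow_add]

theorem neg_one_pow_val_mul_self {R : Type*} [Monoid R] [HasDistribNeg R] (a : ZMod 2) :
    (-1 : R) ^ a.val * (-1) ^ a.val = 1 := by
  rw [← neg_one_pow_val_add, CharTwo.add_self_eq_zero, ZMod.val_zero, pow_zero]

theorem neg_one_pow_val_injective :
    Function.Injective fun a : ZMod 2 => (-1 : ℂ) ^ a.val := by
  intro a b hab
  rcases zmod_two_eq_zero_or_one a with rfl | rfl <;>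
    rcases zmod_two_eq_zero_or_one b with rfl | rfl <;>
    first | rfl | (norm_num [ZMod.val_one] at hab)

theorem exists_neg_one_pow_val_eq {z : ℂ} (hz : z ^ 2 = 1) :
    ∃ a : ZMod 2, z = (-1) ^ a.val := by
  rcases sq_eq_one_iff.mp hz with rfl | rfl
  · exact ⟨0, by simp⟩
  · exact ⟨1, by simp [ZMod.val_one]⟩

theorem I_pow_val_add (a b : ZMod 2) :
    Complex.I ^ (a + b).val = Complex.I ^ a.val * Complex.I ^ b.val * (-1) ^ (a * b).val := by
  rcases zmod_two_eq_zero_or_one a with rfl | rfl <;>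
    rcases zmod_two_eq_zero_or_one b with rfl | rfl <;>
    simp [ZMod.val_one, CharTwo.add_self_eq_zero]

theorem I_pow_val_sq (a : ZMod 2) : (Complex.I ^ a.val) ^ 2 = (-1) ^ a.val := by
  rw [← pow_mul, mul_comm, pow_mul, Complex.I_sq]

end Signs

section QuadraticPhase

variable {V V' : Type*} [AddCommGroup V] [Module (ZMod 2) V] [AddCommGroup V'] [Module (ZMod 2) V']

/-- Quadratic phase functions: the nonzero multiples of `x ↦ i ^ l(x) (-1) ^ q(x)` with `l` linear
and `q` quadratic, characterized without coordinates by their failure to be multiplicative being the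
sign of a bilinear form; see `IsQuadraticPhase.exists_eq_I_pow_mul_neg_one_pow`. -/
def IsQuadraticPhase (p : V → ℂ) : Prop :=
  p 0 ≠ 0 ∧ ∃ B : LinearMap.BilinForm (ZMod 2) V,
    ∀ x y, p (x + y) * p 0 = p x * p y * (-1) ^ (B x y).val

theorem isQuadraticPhase_const {c : ℂ} (hc : c ≠ 0) : IsQuadraticPhase fun _ : V => c :=
  ⟨hc, 0, by simp⟩

theorem isQuadraticPhase_neg_one_pow_linearMap (f : V →ₗ[ZMod 2] ZMod 2) :
    IsQuadraticPhase fun x => (-1) ^ (f x).val :=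
  ⟨by simp, 0, by simp [neg_one_pow_val_add]⟩

theorem isQuadraticPhase_neg_one_pow_quadraticForm (Q : QuadraticForm (ZMod 2) V) :
    IsQuadraticPhase fun x => (-1) ^ (Q x).val := by
  refine ⟨by simp, Q.polarBilin, fun x y => ?_⟩
  simp [QuadraticMap.map_add Q x y, neg_one_pow_val_add]

theorem isQuadraticPhase_I_pow_linearMap (f : V →ₗ[ZMod 2] ZMod 2) :
    IsQuadraticPhase fun x => Complex.I ^ (f x).val :=
  ⟨by simp, .linMulLin f f, by simp [I_pow_val_add]⟩

theorem isQuadraticPhase_one_add_mul_neg_one_pow {γ : ℂ} (hγ : γ ^ 2 = -1)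
    (f : V →ₗ[ZMod 2] ZMod 2) : IsQuadraticPhase fun x => 1 + γ * (-1) ^ (f x).val := by
  have hne : 1 + γ ≠ 0 := fun h => by
    rw [eq_neg_of_add_eq_zero_right h] at hγ
    norm_num at hγ
  refine ⟨by simpa using hne, .linMulLin f f, fun x y => ?_⟩
  simp only [map_add, map_zero, LinearMap.BilinForm.linMulLin_apply]
  rcases zmod_two_eq_zero_or_one (f x) with hx | hx <;>
    rcases zmod_two_eq_zero_or_one (f y) with hy | hy <;>
    simp only [hx, hy, CharTwo.add_self_eq_zero, ZMod.val_zero, ZMod.val_one, add_zero, zero_add,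
      mul_zero, mul_one, pow_zero, pow_one]
  · ring
  · linear_combination 2 * hγ

theorem exists_linearMap_eq_apply_self {B : LinearMap.BilinForm (ZMod 2) V} (hB : B.IsSymm) :
    ∃ l : V →ₗ[ZMod 2] ZMod 2, ∀ x, l x = B x x := by
  have hadd : ∀ x y, B (x + y) (x + y) = B x x + B y y := fun x y => by
    simp only [map_add, LinearMap.add_apply, ← hB.eq x y]
    linear_combination CharTwo.add_self_eq_zero (B x y)
  exact ⟨(AddMonoidHom.mk' (fun x => B x x) hadd).toZModLinearMap 2, fun _ => rfl⟩

namespace IsQuadraticPhase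

variable {p p' : V → ℂ}

theorem mul (hp : IsQuadraticPhase p) (hp' : IsQuadraticPhase p') :
    IsQuadraticPhase fun x => p x * p' x := by
  obtain ⟨h0, B, hB⟩ := hp
  obtain ⟨h0', B', hB'⟩ := hp'
  refine ⟨mul_ne_zero h0 h0', B + B', fun x y => ?_⟩
  rw [LinearMap.add_apply, LinearMap.add_apply, neg_one_pow_val_add]
  linear_combination p' (x + y) * p' 0 * hB x y + p x * p y * (-1) ^ (B x y).val * hB' x y

theorem const_mul (hp : IsQuadraticPhase p) {c : ℂ} (hc : c ≠ 0) :
    IsQuadraticPhase fun x => c * p x :=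
  (isQuadraticPhase_const hc).mul hp

theorem comp_linearMap (hp : IsQuadraticPhase p) (f : V' →ₗ[ZMod 2] V) :
    IsQuadraticPhase fun x => p (f x) := by
  obtain ⟨h0, B, hB⟩ := hp
  exact ⟨by simpa using h0, B.comp f f, by simp [hB]⟩

theorem ne_zero (hp : IsQuadraticPhase p) (x : V) : p x ≠ 0 := by
  obtain ⟨h0, B, hB⟩ := hp
  intro hx
  simpa [hx, h0] using hB x (-x)

theorem comp_add_const (hp : IsQuadraticPhase p) (v : V) : IsQuadraticPhase fun x => p (x + v) := by
  have hv := hp.ne_zero v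
  obtain ⟨h0, B, hB⟩ := hp
  refine ⟨by simpa using hv, B, fun x y => mul_right_cancel₀ h0 ?_⟩
  have hxyv := hB x (y + v)
  rw [map_add, neg_one_pow_val_add, ← add_assoc] at hxyv
  simp only [zero_add]
  linear_combination p v * hxyv - p (y + v) * (-1) ^ (B x y).val * hB x v

theorem exists_isSymm (hp : IsQuadraticPhase p) :
    ∃ B : LinearMap.BilinForm (ZMod 2) V, B.IsSymm ∧
      ∀ x y, p (x + y) * p 0 = p x * p y * (-1) ^ (B x y).val := by
  have hne := hp.ne_zero
  obtain ⟨-, B, hB⟩ := hp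
  refine ⟨B, ⟨fun x y => neg_one_pow_val_injective ?_⟩, hB⟩
  apply mul_left_cancel₀ (mul_ne_zero (hne x) (hne y))
  dsimp only [RingHom.id_apply]
  rw [← hB, add_comm, hB, mul_comm (p y)]

theorem sq_eq {B : LinearMap.BilinForm (ZMod 2) V}
    (hB : ∀ x y, p (x + y) * p 0 = p x * p y * (-1) ^ (B x y).val) (x : V) :
    p x ^ 2 = p 0 ^ 2 * (-1) ^ (B x x).val := by
  have hxx := hB x x
  rw [ZModModule.add_self] at hxx
  linear_combination -(-1) ^ (B x x).val * hxx -
    p x ^ 2 * neg_one_pow_val_mul_self (R := ℂ) (B x x)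

theorem exists_eq_I_pow_mul_neg_one_pow (hp : IsQuadraticPhase p) :
    ∃ (l : V →ₗ[ZMod 2] ZMod 2) (Q : QuadraticForm (ZMod 2) V),
      ∀ x, p x = p 0 * (Complex.I ^ (l x).val * (-1) ^ (Q x).val) := by
  have h0 : p 0 ≠ 0 := hp.ne_zero 0
  obtain ⟨B, hsymm, hB⟩ := hp.exists_isSymm
  obtain ⟨l, hl⟩ := exists_linearMap_eq_apply_self hsymm
  have hI : ∀ x, Complex.I ^ (l x).val ≠ 0 := fun x => pow_ne_zero _ Complex.I_ne_zero
  have hsign : ∀ x, ∃ a : ZMod 2, p x / (p 0 * Complex.I ^ (l x).val) = (-1) ^ a.val := fun x => by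
    apply exists_neg_one_pow_val_eq
    rw [div_pow, mul_pow, I_pow_val_sq, hl, ← sq_eq hB]
    exact div_self (pow_ne_zero 2 (hp.ne_zero x))
  choose q hq using hsign
  have hpq : ∀ x, p x = p 0 * (Complex.I ^ (l x).val * (-1) ^ (q x).val) := fun x => by
    rw [← hq, ← mul_assoc, mul_div_cancel₀ _ (mul_ne_zero h0 (hI x))]
  have hadd : ∀ x y, q (x + y) = q x + q y + (B x y + l x * l y) := fun x y => by
    apply neg_one_pow_val_injective
    apply mul_left_cancel₀ (mul_ne_zero (mul_ne_zero h0 h0) (mul_ne_zero (hI x) (hI y)))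
    have hxy := hB x y
    rw [hpq x, hpq y, hpq (x + y), map_add, I_pow_val_add] at hxy
    simp only [neg_one_pow_val_add]
    linear_combination (-1) ^ (l x * l y).val * hxy -
      p 0 * p 0 * (Complex.I ^ (l x).val * Complex.I ^ (l y).val) * (-1) ^ (q (x + y)).val *
        neg_one_pow_val_mul_self (R := ℂ) (l x * l y)
  have hq0 : q 0 = 0 := by simpa using hadd 0 0
  refine ⟨l, ⟨q, fun a x => ?_, B + LinearMap.BilinForm.linMulLin l l, by simpa using hadd⟩, hpq⟩
  rcases zmod_two_eq_zero_or_one a with rfl | rfl <;> simp [hq0]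

end IsQuadraticPhase

end QuadraticPhase

section AffineQuadraticState

variable {V : Type*} [AddCommGroup V] [Module (ZMod 2) V]

/-- States supported on a nonempty affine subspace `t + W`, on which they are given by a quadratic
phase function. -/
def IsAffineQuadraticState (ψ : V → ℂ) : Prop :=
  ∃ (W : Submodule (ZMod 2) V) (t : V) (p : V → ℂ), IsQuadraticPhase p ∧
    ψ = (AffineSubspace.mk' t W : Set V).indicator p

theorem indicator_mk'_apply (W : Submodule (ZMod 2) V) (t : V) (p : V → ℂ) (x : V) :
    (AffineSubspace.mk' t W : Set V).indicator p x = if x - t ∈ W then p x else 0 := by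
  simp only [Set.indicator_apply, SetLike.mem_coe, AffineSubspace.mem_mk', vsub_eq_sub]

theorem IsAffineQuadraticState.const_mul {ψ : V → ℂ} (hψ : IsAffineQuadraticState ψ) {c : ℂ}
    (hc : c ≠ 0) : IsAffineQuadraticState fun x => c * ψ x := by
  obtain ⟨W, t, p, hp, rfl⟩ := hψ
  exact ⟨W, t, _, hp.const_mul hc, by ext x; simp [Set.indicator_apply]⟩

theorem isAffineQuadraticState_indicator_one_add_neg_one_pow {W : Submodule (ZMod 2) V} {p : V → ℂ}
    (hp : IsQuadraticPhase p) (t : V) {e : V} (he : e ∈ W) {f : V →ₗ[ZMod 2] ZMod 2} (hf : f e = 1)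
    (c : ZMod 2) :
    IsAffineQuadraticState ((AffineSubspace.mk' t W : Set V).indicator
      fun x => (1 + (-1) ^ (c + f x).val) * p x) := by
  let t' := t + (c + f t) • e
  have hmem : ∀ x, x - t' ∈ W ⊓ LinearMap.ker f ↔ x - t ∈ W ∧ c + f x = 0 := fun x => by
    rw [Submodule.mem_inf, LinearMap.mem_ker, ← sub_sub, W.sub_mem_iff_left (W.smul_mem _ he)]
    simp only [map_sub, map_smul, hf, smul_eq_mul, mul_one]
    rw [sub_sub, add_left_comm, CharTwo.add_self_eq_zero, add_zero, CharTwo.sub_eq_add, add_comm c]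
  refine ⟨W ⊓ LinearMap.ker f, t', _, hp.const_mul two_ne_zero, funext fun x => ?_⟩
  rw [indicator_mk'_apply, indicator_mk'_apply, if_congr (hmem x) rfl rfl, ite_and]
  rcases zmod_two_eq_zero_or_one (c + f x) with h | h <;> simp [h, ZMod.val_one, one_add_one_eq_two]

theorem mem_iff_mem_sup_span_and_apply_eq_zero {K M : Type*} [Ring K] [AddCommGroup M] [Module K M]
    {W : Submodule K M} {e : M} {f : M →ₗ[K] K} (hW : W ≤ LinearMap.ker f) (he : f e = 1)
    {x : M} :
    x ∈ W ↔ x ∈ W ⊔ Submodule.span K {e} ∧ f x = 0 := by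
  refine ⟨fun hx => ⟨Submodule.mem_sup_left hx, hW hx⟩, fun ⟨hx, hfx⟩ => ?_⟩
  obtain ⟨w, hw, v, hv, rfl⟩ := Submodule.mem_sup.mp hx
  obtain ⟨a, rfl⟩ := Submodule.mem_span_singleton.mp hv
  have ha : a = 0 := by simpa [LinearMap.mem_ker.mp (hW hw), he] using hfx
  simpa [ha] using hw

namespace IsQuadraticPhase

variable {p : V → ℂ} {W : Submodule (ZMod 2) V} {e : V}

theorem exists_comp_add_const_eq (hp : IsQuadraticPhase p) (e : V) :
    ∃ (γ : ℂ) (f : V →ₗ[ZMod 2] ZMod 2), γ ^ 2 = (-1) ^ (f e).val ∧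
      ∀ x, p (x + e) = γ * (-1) ^ (f x).val * p x := by
  have h0 : p 0 ≠ 0 := hp.ne_zero 0
  obtain ⟨B, hsymm, hB⟩ := hp.exists_isSymm
  refine ⟨p e / p 0, B e, ?_, fun x => ?_⟩
  · rw [div_pow, sq_eq hB, mul_div_cancel_left₀ _ (pow_ne_zero 2 h0)]
  · rw [← hsymm.eq x e, eq_comm, ← mul_left_inj' h0, hB]
    field_simp

theorem isAffineQuadraticState_flip_add_sign_of_mem (hp : IsQuadraticPhase p) (t : V) (he : e ∈ W)
    {ε : V →ₗ[ZMod 2] ZMod 2} (hε : ε e = 1) :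
    IsAffineQuadraticState fun x =>
      (AffineSubspace.mk' t W : Set V).indicator p (x + e) +
        (-1) ^ (ε x).val * (AffineSubspace.mk' t W : Set V).indicator p x := by
  obtain ⟨γ, f, hγ, hfe⟩ := hp.exists_comp_add_const_eq e
  have hp' := (isQuadraticPhase_neg_one_pow_linearMap ε).mul hp
  have hsum : (fun x => (AffineSubspace.mk' t W : Set V).indicator p (x + e) +
      (-1) ^ (ε x).val * (AffineSubspace.mk' t W : Set V).indicator p x) =
      (AffineSubspace.mk' t W : Set V).indicator
        fun x => (1 + γ * (-1) ^ ((f + ε) x).val) * ((-1) ^ (ε x).val * p x) := funext fun x => by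
    simp only [indicator_mk'_apply, add_sub_right_comm, W.add_mem_iff_left he, mul_ite, mul_zero,
      ← ite_add_zero]
    congr 1
    rw [hfe, LinearMap.add_apply, neg_one_pow_val_add]
    linear_combination -γ * (-1) ^ (f x).val * p x * neg_one_pow_val_mul_self (R := ℂ) (ε x)
  rw [hsum]
  rcases zmod_two_eq_zero_or_one (f e) with h | h <;> rw [h] at hγ
  · obtain ⟨c, rfl⟩ := exists_neg_one_pow_val_eq (z := γ) (by simpa using hγ)
    simp only [← neg_one_pow_val_add]
    exact isAffineQuadraticState_indicator_one_add_neg_one_pow hp' t he (by simp [h, hε]) c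
  · rw [ZMod.val_one, pow_one] at hγ
    exact ⟨W, t, _, (isQuadraticPhase_one_add_mul_neg_one_pow hγ _).mul hp', rfl⟩

theorem isAffineQuadraticState_flip_add_sign_of_notMem (hp : IsQuadraticPhase p) (t : V)
    (he : e ∉ W) (ε : V →ₗ[ZMod 2] ZMod 2) :
    IsAffineQuadraticState fun x =>
      (AffineSubspace.mk' t W : Set V).indicator p (x + e) +
        (-1) ^ (ε x).val * (AffineSubspace.mk' t W : Set V).indicator p x := by
  obtain ⟨f, hfe, hfW⟩ := Submodule.exists_le_ker_of_notMem he
  replace hfe : f e = 1 := (zmod_two_eq_zero_or_one _).resolve_left hfe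
  let b (x : V) : ZMod 2 := f (x - t)
  let W' := W ⊔ Submodule.span (ZMod 2) {e}
  have he' : e ∈ W' := Submodule.mem_sup_right (Submodule.mem_span_singleton_self e)
  have hmem : ∀ x, x - t ∈ W ↔ x - t ∈ W' ∧ b x = 0 := fun x =>
    mem_iff_mem_sup_span_and_apply_eq_zero hfW hfe
  have hmem_flip : ∀ x, x + e - t ∈ W ↔ x - t ∈ W' ∧ b x = 1 := fun x => by
    rw [mem_iff_mem_sup_span_and_apply_eq_zero hfW hfe, add_sub_right_comm,
      W'.add_mem_iff_left he', map_add, hfe, CharTwo.add_eq_zero]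
  -- `x + b x • e` is the one of `x` and `x + e` that lies in the support.
  have hproj : IsQuadraticPhase fun x => p (x + b x • e) := by
    have := (hp.comp_add_const (-f t • e)).comp_linearMap (LinearMap.id + f.smulRight e)
    simpa [b, add_smul, add_assoc, CharTwo.sub_eq_add] using this
  have hsign : IsQuadraticPhase fun x => (-1) ^ (ε x * (b x + 1)).val := by
    have hexp : ∀ x, ε x * (b x + 1) = ε x * f x + (1 + f t) * ε x := fun x => by
      simp only [b, map_sub, CharTwo.sub_eq_add]
      ring
    simp only [hexp, neg_one_pow_val_add]
    exact (isQuadraticPhase_neg_one_pow_quadraticForm (QuadraticMap.linMulLin ε f)).mul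
      (isQuadraticPhase_neg_one_pow_linearMap ((1 + f t) • ε))
  refine ⟨W', t, _, hsign.mul hproj, funext fun x => ?_⟩
  rw [indicator_mk'_apply, indicator_mk'_apply, indicator_mk'_apply, if_congr (hmem x) rfl rfl,
    if_congr (hmem_flip x) rfl rfl, ite_and, ite_and]
  rcases zmod_two_eq_zero_or_one (b x) with h | h <;> simp [h, CharTwo.add_self_eq_zero]

end IsQuadraticPhase

theorem IsAffineQuadraticState.flip_add_sign {ψ : V → ℂ}
    (hψ : IsAffineQuadraticState ψ) {e : V} {ε : V →ₗ[ZMod 2] ZMod 2} (hε : ε e = 1) :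
    IsAffineQuadraticState fun x => ψ (x + e) + (-1) ^ (ε x).val * ψ x := by
  obtain ⟨W, t, p, hp, rfl⟩ := hψ
  by_cases he : e ∈ W
  · exact hp.isAffineQuadraticState_flip_add_sign_of_mem t he hε
  · exact hp.isAffineQuadraticState_flip_add_sign_of_notMem t he ε

end AffineQuadraticState

section Coordinates

theorem isLinear_iff_exists_linearMap {K : ℕ} {l : (Fin K → ZMod 2) → ZMod 2} :
    IsLinear l ↔ ∃ f : (Fin K → ZMod 2) →ₗ[ZMod 2] ZMod 2, ⇑f = l := by
  constructor
  · rintro ⟨d, hd⟩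
    exact ⟨dotProductBilin (ZMod 2) (ZMod 2) d, funext fun x => (hd x).symm⟩
  · rintro ⟨f, rfl⟩
    refine ⟨fun i => f (Pi.single i 1), fun x => ?_⟩
    simp_rw [mul_comm, ← smul_eq_mul, ← map_smul, ← map_sum, ← pi_eq_sum_univ' x]

theorem toQuadraticForm'_apply_eq_sum {n R : Type*} [Fintype n] [DecidableEq n] [CommRing R]
    (M : Matrix n n R) (x : n → R) : M.toQuadraticForm' x = ∑ i, ∑ j, M i j * x i * x j := by
  simp only [Matrix.toQuadraticForm', LinearMap.BilinMap.toQuadraticMap_apply,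
    Matrix.toLinearMap₂'_apply, smul_eq_mul, mul_comm, mul_left_comm]

theorem isQuadratic_iff_exists_quadraticForm {K : ℕ} {q : (Fin K → ZMod 2) → ZMod 2} :
    IsQuadratic q ↔ ∃ Q : QuadraticForm (ZMod 2) (Fin K → ZMod 2), ⇑Q = q := by
  constructor
  · rintro ⟨c, d, hq⟩
    refine ⟨(Matrix.of c + Matrix.diagonal d).toQuadraticForm', funext fun x => ?_⟩
    have hsq : ∀ a : ZMod 2, a * a = a := fun a => by rw [← sq, ZMod.pow_card a]
    simp [toQuadraticForm'_apply_eq_sum, hq, add_mul, Finset.sum_add_distrib,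
      Matrix.diagonal_apply, mul_assoc, hsq]
  · rintro ⟨Q, rfl⟩
    let B := Q.toBilin (Pi.basisFun (ZMod 2) (Fin K))
    have hQ : (LinearMap.toMatrix₂' (ZMod 2) B).toQuadraticForm' = Q := by
      rw [Matrix.toQuadraticForm', Matrix.toLinearMap₂'_toMatrix', Q.toQuadraticMap_toBilin]
    exact ⟨LinearMap.toMatrix₂' (ZMod 2) B, 0, fun x => by
      simp only [← toQuadraticForm'_apply_eq_sum, hQ, Pi.zero_apply, zero_mul,
        Finset.sum_const_zero, add_zero]⟩

theorem exists_matrix_rank_eq_and_range_eq {K ι : Type*} [Field K] [Finite ι]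
    (W : Submodule K (ι → K)) :
    ∃ (m : ℕ) (R : Matrix ι (Fin m) K), R.rank = m ∧ LinearMap.range R.mulVecLin = W := by
  let R := LinearMap.toMatrix' (W.subtype ∘ₗ (Module.finBasis K W).equivFun.symm.toLinearMap)
  have hR : LinearMap.range R.mulVecLin = W := by
    rw [← Matrix.toLin'_apply', Matrix.toLin'_toMatrix', LinearMap.range_comp, LinearEquiv.range,
      Submodule.map_top, Submodule.range_subtype]
  exact ⟨_, R, by rw [Matrix.rank, hR], hR⟩

theorem Hgate_apply {N : ℕ} (k : Fin N) (y z : Fin N → ZMod 2) :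
    Hgate k y z = ((1 / Real.sqrt 2 : ℝ) : ℂ) *
      ((if z = y + Pi.single k 1 then 1 else 0) + (if z = y then (-1) ^ (y k).val else 0)) := by
  by_cases h : ∀ i, i ≠ k → y i = z i
  · obtain ⟨a, rfl⟩ : ∃ a, z = y + Pi.single k a := by
      refine ⟨z k - y k, funext fun i => ?_⟩
      rcases eq_or_ne i k with rfl | hi
      · simp
      · simp [hi, h i hi]
    rw [Hgate, Matrix.of_apply, if_pos h]
    rcases zmod_two_eq_zero_or_one a with rfl | rfl <;>
      rcases zmod_two_eq_zero_or_one (y k) with hy | hy <;>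
      simp [hy, ZMod.val_one, CharTwo.add_self_eq_zero]
  · have hne : ∀ a : ZMod 2, z ≠ y + Pi.single k a := by
      rintro a rfl
      exact h fun i hi => by simp [hi]
    have hzy : z ≠ y := by simpa using hne 0
    rw [Hgate, Matrix.of_apply, if_neg h, if_neg (hne 1), if_neg hzy, add_zero, mul_zero]

theorem Hgate_mulVec_apply {N : ℕ} (k : Fin N) (ψ : (Fin N → ZMod 2) → ℂ) (y : Fin N → ZMod 2) :
    (Hgate k).mulVec ψ y = ((1 / Real.sqrt 2 : ℝ) : ℂ) *
      (ψ (y + Pi.single k 1) + (-1) ^ (y k).val * ψ y) := by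
  simp only [Matrix.mulVec, dotProduct, Hgate_apply, mul_assoc, add_mul, ite_mul, zero_mul, one_mul,
    ← Finset.mul_sum, Finset.sum_add_distrib, Finset.sum_ite_eq', Finset.mem_univ, if_true]

theorem mem_mk'_range_mulVecLin {K ι κ : Type*} [CommRing K] [Fintype κ] {R : Matrix ι κ K}
    {t x : ι → K} :
    x ∈ AffineSubspace.mk' t (LinearMap.range R.mulVecLin) ↔ ∃ u, x = R.mulVec u + t := by
  simp only [AffineSubspace.mem_mk', vsub_eq_sub, LinearMap.mem_range, Matrix.mulVecLin_apply,
    eq_sub_iff_add_eq, eq_comm]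

theorem isAffineQuadraticState_iff_exists_matrix {N : ℕ} {ψ : (Fin N → ZMod 2) → ℂ} :
    IsAffineQuadraticState ψ ↔
      ∃ (m : ℕ) (R : Matrix (Fin N) (Fin m) (ZMod 2)) (t : Fin N → ZMod 2)
        (l q : (Fin N → ZMod 2) → ZMod 2) (c : ℂ),
        R.rank = m ∧ IsLinear l ∧ IsQuadratic q ∧ c ≠ 0 ∧
        ψ = c • ({x | ∃ u, x = R.mulVec u + t} : Set _).indicator
          fun x => Complex.I ^ (l x).val * (-1 : ℂ) ^ (q x).val := by
  simp only [isLinear_iff_exists_linearMap, isQuadratic_iff_exists_quadraticForm,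
    ← mem_mk'_range_mulVecLin, SetLike.setOfPred_mem_eq]
  constructor
  · rintro ⟨W, t, p, hp, rfl⟩
    obtain ⟨m, R, hR, rfl⟩ := exists_matrix_rank_eq_and_range_eq W
    obtain ⟨l, Q, hlQ⟩ := hp.exists_eq_I_pow_mul_neg_one_pow
    refine ⟨m, R, t, l, Q, p 0, hR, ⟨l, rfl⟩, ⟨Q, rfl⟩, hp.ne_zero 0, ?_⟩
    exact (congrArg _ (funext hlQ)).trans (Set.indicator_const_smul _ (p 0) _)
  · rintro ⟨m, R, t, _, _, c, -, ⟨l, rfl⟩, ⟨Q, rfl⟩, hc, rfl⟩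
    exact IsAffineQuadraticState.const_mul ⟨_, t, _, (isQuadraticPhase_I_pow_linearMap l).mul
      (isQuadraticPhase_neg_one_pow_quadraticForm Q), rfl⟩ hc

end Coordinates

theorem IsAffineQuadraticState.hadamard {N : ℕ} (k : Fin N) {ψ : (Fin N → ZMod 2) → ℂ}
    (hψ : IsAffineQuadraticState ψ) : IsAffineQuadraticState ((Hgate k).mulVec ψ) := by
  rw [funext (Hgate_mulVec_apply k ψ)]
  exact (hψ.flip_add_sign (ε := LinearMap.proj k) (Pi.single_eq_same k 1)).const_mul
    (by simp)

/-- Applying a Hadamard gate to any single qubit of a state of the form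
`|ψ⟩ ∝ Σ_{x∈A} i^{l(x)} (-1)^{q(x)} |x⟩` (with `A = {Ru + t}` affine, `R` of full
column rank, `l` linear, `q` quadratic) yields a state of the same form. -/
theorem hadamard_preserves_form (N m : ℕ) (k : Fin N)
    (R : Matrix (Fin N) (Fin m) (ZMod 2)) (hR : R.rank = m)
    (t : Fin N → ZMod 2)
    (l q : (Fin N → ZMod 2) → ZMod 2)
    (hl : IsLinear l) (hq : IsQuadratic q)
    (ψ : (Fin N → ZMod 2) → ℂ)
    (hψ : ψ = ({x | ∃ u, x = R.mulVec u + t} : Set _).indicator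
        fun x => Complex.I ^ (l x).val * (-1 : ℂ) ^ (q x).val) :
    ∃ (m' : ℕ) (R' : Matrix (Fin N) (Fin m') (ZMod 2)) (t' : Fin N → ZMod 2)
      (l' q' : (Fin N → ZMod 2) → ZMod 2) (c : ℂ),
      R'.rank = m' ∧ IsLinear l' ∧ IsQuadratic q' ∧ c ≠ 0 ∧
      (Hgate k).mulVec ψ =
        c • ({x | ∃ u, x = R'.mulVec u + t'} : Set _).indicator
          fun x => Complex.I ^ (l' x).val * (-1 : ℂ) ^ (q' x).val :=
  isAffineQuadraticState_iff_exists_matrix.mp <| .hadamard k <|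
    isAffineQuadraticState_iff_exists_matrix.mpr
      ⟨m, R, t, l, q, 1, hR, hl, hq, one_ne_zero, by rw [one_smul, hψ]⟩
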